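/- Let k ≥ 1, 0 < s < 1, and ε₁, …, ε_k > 0. Then (∏_{j=1}^k εⱼ)·∫_{S^{k−1}} (∑_{j=1}^k εⱼ² xⱼ²)^{−(k+2s)/2} dσ(x) = ∫_{S^{k−1}} (∑_{j=1}^k εⱼ^{−2} yⱼ²)^{s} dσ(y). -/

import Mathlib

open MeasureTheory

noncomputable def QF {k : ℕ} (d : Fin k → ℝ) (x : EuclideanSpace ℝ (Fin k)) : ℝ :=
  ∑ j, d j ^ 2 * (x j) ^ 2

lemma QF_cont {k : ℕ} (d : Fin k → ℝ) : Continuous (QF d) := by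
  unfold QF; fun_prop

lemma QF_smul {k : ℕ} (d : Fin k → ℝ) (r : ℝ) (x : EuclideanSpace ℝ (Fin k)) :
    QF d (r • x) = r ^ 2 * QF d x := by
  unfold QF
  rw [Finset.mul_sum]
  refine Finset.sum_congr rfl fun j _ => ?_
  simp only [PiLp.smul_apply, smul_eq_mul]; ring

lemma QF_nonneg {k : ℕ} (d : Fin k → ℝ) (x : EuclideanSpace ℝ (Fin k)) : 0 ≤ QF d x :=
  Finset.sum_nonneg fun j _ => by positivity

lemma QF_pos {k : ℕ} (d : Fin k → ℝ) (hd : ∀ j, 0 < d j)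
    (x : Metric.sphere (0 : EuclideanSpace ℝ (Fin k)) 1) : 0 < QF d x := by
  have hx : (x : EuclideanSpace ℝ (Fin k)) ≠ 0 := by
    intro h
    have := x.2
    rw [mem_sphere_zero_iff_norm, h] at this
    simp at this
  obtain ⟨j, hj⟩ : ∃ j, (x : EuclideanSpace ℝ (Fin k)) j ≠ 0 := by
    by_contra! h
    exact hx (by ext j; simpa using h j)
  refine Finset.sum_pos' (fun j _ => by positivity) ⟨j, Finset.mem_univ _, ?_⟩
  have := hd j
  positivity

noncomputable def FF {k : ℕ} (s : ℝ) (d e : Fin k → ℝ) (x : EuclideanSpace ℝ (Fin k)) : ENNReal :=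
  if QF d x < 1 then ENNReal.ofReal (QF e x ^ s) else 0

lemma FF_meas {k : ℕ} (s : ℝ) (d e : Fin k → ℝ) : Measurable (FF s d e) := by
  unfold FF
  refine Measurable.ite (measurableSet_lt (QF_cont d).measurable measurable_const) ?_ measurable_const
  exact ((QF_cont e).measurable.pow_const s).ennreal_ofReal

lemma polar {k : ℕ} (G : EuclideanSpace ℝ (Fin k) → ENNReal) (hk : 1 ≤ k) (hG : Measurable G) :
    ∫⁻ x, G x = ∫⁻ w : Metric.sphere (0 : EuclideanSpace ℝ (Fin k)) 1,
      (∫⁻ r in Set.Ioi (0 : ℝ), ENNReal.ofReal (r ^ (k - 1)) * G (r • (w : EuclideanSpace ℝ (Fin k))))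
        ∂(volume : Measure (EuclideanSpace ℝ (Fin k))).toSphere := by
  have : Nontrivial (EuclideanSpace ℝ (Fin k)) := by
    have : Nonempty (Fin k) := ⟨⟨0, hk⟩⟩
    infer_instance
  have h0 : ∫⁻ x, G x = ∫⁻ x : ({(0)}ᶜ : Set (EuclideanSpace ℝ (Fin k))), G x
      ∂(volume.comap Subtype.val) := by
    rw [lintegral_subtype_comap (measurableSet_singleton _).compl, restrict_compl_singleton]
  have mp := (volume : Measure (EuclideanSpace ℝ (Fin k))).measurePreserving_homeomorphUnitSphereProd
  have hm : Measurable (fun p : Metric.sphere (0 : EuclideanSpace ℝ (Fin k)) 1 × Set.Ioi (0:ℝ) =>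
      G ((p.2 : ℝ) • (p.1 : EuclideanSpace ℝ (Fin k)))) := by
    apply hG.comp
    fun_prop
  have h1 := mp.lintegral_comp hm
  rw [h0]
  have h2 : ∀ x : ({(0)}ᶜ : Set (EuclideanSpace ℝ (Fin k))),
      (((homeomorphUnitSphereProd (EuclideanSpace ℝ (Fin k)) x).2 : ℝ) •
        ((homeomorphUnitSphereProd (EuclideanSpace ℝ (Fin k)) x).1 : EuclideanSpace ℝ (Fin k))) = x := by
    intro x
    have hx : ‖(x : EuclideanSpace ℝ (Fin k))‖ ≠ 0 := norm_ne_zero_iff.2 x.2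
    simp [smul_smul, mul_inv_cancel₀ hx]
  simp only [h2] at h1
  rw [h1, lintegral_prod _ hm.aemeasurable]
  refine lintegral_congr fun w => ?_
  have hm2 : Measurable (fun r : Set.Ioi (0:ℝ) => G ((r : ℝ) • (w : EuclideanSpace ℝ (Fin k)))) := by
    apply hG.comp
    fun_prop
  rw [Measure.volumeIoiPow, lintegral_withDensity_eq_lintegral_mul _ (by fun_prop) hm2]
  simp only [Pi.mul_apply, finrank_euclideanSpace, Fintype.card_fin]
  rw [lintegral_subtype_comap measurableSet_Ioi
    (fun r : ℝ => ENNReal.ofReal (r ^ (k - 1)) * G (r • (w : EuclideanSpace ℝ (Fin k))))]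

lemma radial (k : ℕ) (hk : 1 ≤ k) (s : ℝ) (hs0 : 0 < s) (a b : ℝ) (ha : 0 < a) (hb : 0 < b) :
    ∫⁻ r in Set.Ioi (0 : ℝ), ENNReal.ofReal (r ^ (k - 1)) *
      (if r ^ 2 * a < 1 then ENNReal.ofReal ((r ^ 2 * b) ^ s) else 0) =
    ENNReal.ofReal (a ^ (-(((k : ℝ) + 2 * s) / 2)) * b ^ s / (k + 2 * s)) := by
  set R : ℝ := a ^ (-(1/2) : ℝ) with hR
  have hRpos : 0 < R := Real.rpow_pos_of_pos ha _
  have hR2 : R ^ 2 * a = 1 := by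
    rw [hR, ← Real.rpow_natCast, ← Real.rpow_mul ha.le]
    norm_num
    rw [Real.rpow_neg_one]; field_simp
  have hk' : (1:ℝ) ≤ k := by exact_mod_cast hk
  have e1 : ∫⁻ r in Set.Ioi (0 : ℝ), ENNReal.ofReal (r ^ (k - 1)) *
      (if r ^ 2 * a < 1 then ENNReal.ofReal ((r ^ 2 * b) ^ s) else 0) =
      ∫⁻ r in Set.Ioi (0 : ℝ), (Set.Iio R).indicator
        (fun r => ENNReal.ofReal (b ^ s * r ^ ((k:ℝ) - 1 + 2 * s))) r := by
    refine setLIntegral_congr_fun measurableSet_Ioi fun r hr => ?_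
    have hr : 0 < r := hr
    have hiff : r ^ 2 * a < 1 ↔ r < R := by
      rw [← hR2, mul_lt_mul_iff_left₀ ha, pow_lt_pow_iff_left₀ hr.le hRpos.le (by norm_num)]
    simp only [Set.indicator, Set.mem_Iio, hiff]
    split_ifs with h
    · rw [← ENNReal.ofReal_mul (by positivity)]
      congr 1
      rw [Real.mul_rpow (by positivity) hb.le, Real.rpow_add hr, ← Real.rpow_natCast r 2,
        ← Real.rpow_mul hr.le, ← Real.rpow_natCast r (k-1), Nat.cast_sub hk]
      push_cast; ring
    · simp
  rw [e1, setLIntegral_indicator measurableSet_Iio]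
  have : Set.Iio R ∩ Set.Ioi 0 = Set.Ioo 0 R := by ext; simp [and_comm]
  rw [this, Measure.restrict_congr_set Ioo_ae_eq_Ioc, ← ofReal_integral_eq_lintegral_ofReal]
  · rw [← intervalIntegral.integral_of_le hRpos.le, intervalIntegral.integral_const_mul,
      integral_rpow (Or.inl (by linarith)), Real.zero_rpow (by linarith)]
    congr 1
    have : R ^ ((k:ℝ) - 1 + 2 * s + 1) = a ^ (-(((k : ℝ) + 2 * s) / 2)) := by
      rw [hR, ← Real.rpow_mul ha.le]; congr 1; ring
    rw [this]
    have : (k:ℝ) - 1 + 2 * s + 1 = k + 2 * s := by ring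
    rw [this]; ring
  · exact (intervalIntegral.intervalIntegrable_rpow' (by linarith)).1.const_mul _
  · filter_upwards [ae_restrict_mem measurableSet_Ioc] with r hr
    have := hr.1
    simp only [Pi.zero_apply]; positivity

lemma FF_int (k : ℕ) (hk : 1 ≤ k) (s : ℝ) (hs0 : 0 < s)
    (d e : Fin k → ℝ) (hd : ∀ j, 0 < d j) (he : ∀ j, 0 < e j) :
    (∫⁻ x, FF s d e x).toReal = (∫ w : Metric.sphere (0 : EuclideanSpace ℝ (Fin k)) 1,
      QF d w ^ (-(((k : ℝ) + 2 * s) / 2)) * QF e w ^ s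
        ∂(volume : Measure (EuclideanSpace ℝ (Fin k))).toSphere) / (k + 2 * s) := by
  rw [polar _ hk (FF_meas s d e), ← integral_div, integral_eq_lintegral_of_nonneg_ae]
  · congr 1
    refine lintegral_congr fun w => ?_
    simp only [FF, QF_smul]
    exact radial k hk s hs0 _ _ (QF_pos d hd w) (QF_pos e he w)
  · refine Filter.Eventually.of_forall fun w => ?_
    have := QF_nonneg d w
    have := QF_nonneg e w
    simp only [Pi.zero_apply]; positivity
  · have h1 := (QF_cont d).measurable
    have h2 := (QF_cont e).measurable
    refine Measurable.aestronglyMeasurable ?_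
    exact (((h1.comp measurable_subtype_coe).pow_const _).mul
      ((h2.comp measurable_subtype_coe).pow_const _)).div_const _

lemma FF_change (k : ℕ) (s : ℝ) (ε : Fin k → ℝ) (hε : ∀ j, 0 < ε j) :
    (∏ j, ε j) * (∫⁻ x, FF s ε (fun _ => 1) x).toReal =
      (∫⁻ x, FF s (fun _ => 1) (fun j => (ε j)⁻¹) x).toReal := by
  set L : EuclideanSpace ℝ (Fin k) →ₗ[ℝ] EuclideanSpace ℝ (Fin k) :=
    Matrix.toLpLin 2 2 (Matrix.diagonal ε) with hL
  have hdet : LinearMap.det L = ∏ j, ε j := by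
    rw [hL, LinearMap.det_toLpLin, Matrix.det_diagonal]
  have hp : 0 < ∏ j, ε j := Finset.prod_pos fun j _ => hε j
  have hLa : ∀ x j, L x j = ε j * x j := by
    intro x j
    simp [hL, Matrix.toLpLin_apply, Matrix.mulVec_diagonal]
  have hmap := Measure.map_linearMap_addHaar_eq_smul_addHaar
    (volume : Measure (EuclideanSpace ℝ (Fin k))) (f := L) (by rw [hdet]; exact hp.ne')
  have hFF : ∀ x, FF s (fun _ => 1) (fun j => (ε j)⁻¹) (L x) = FF s ε (fun _ => 1) x := by
    intro x
    have h1 : QF (fun _ => 1) (L x) = QF ε x := by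
      simp only [QF, hLa]
      exact Finset.sum_congr rfl fun j _ => by ring
    have h2 : QF (fun j => (ε j)⁻¹) (L x) = QF (fun _ => 1) x := by
      simp only [QF, hLa]
      refine Finset.sum_congr rfl fun j _ => ?_
      have := (hε j).ne'
      field_simp
    simp only [FF, h1, h2]
  have hLm : Measurable L := L.continuous_of_finiteDimensional.measurable
  have := lintegral_map (μ := volume) (FF_meas s (fun _ => 1) (fun j => (ε j)⁻¹)) hLm
  rw [hmap, lintegral_smul_measure, hdet] at this
  simp only [hFF] at this
  rw [← this, smul_eq_mul, ENNReal.toReal_mul, ENNReal.toReal_ofReal (abs_nonneg _),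
    abs_of_pos (inv_pos.2 hp), ← mul_assoc, mul_inv_cancel₀ hp.ne', one_mul]

lemma QF_one {k : ℕ} (x : Metric.sphere (0 : EuclideanSpace ℝ (Fin k)) 1) :
    QF (fun _ => 1) (x : EuclideanSpace ℝ (Fin k)) = 1 := by
  have h := x.2
  rw [mem_sphere_zero_iff_norm] at h
  have := EuclideanSpace.real_norm_sq_eq (x : EuclideanSpace ℝ (Fin k))
  rw [h] at this
  simp only [QF, one_pow, one_mul]
  rw [← this]; norm_num

theorem stmt13 (k : ℕ) (hk : 1 ≤ k) (s : ℝ) (hs0 : 0 < s) (hs1 : s < 1)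
    (ε : Fin k → ℝ) (hε : ∀ j, 0 < ε j) :
    (∏ j, ε j) * ∫ x : Metric.sphere (0 : EuclideanSpace ℝ (Fin k)) 1,
        (∑ j, ε j ^ 2 * ((x : EuclideanSpace ℝ (Fin k)) j) ^ 2) ^ (-(((k : ℝ) + 2 * s) / 2))
        ∂(volume : Measure (EuclideanSpace ℝ (Fin k))).toSphere =
      ∫ y : Metric.sphere (0 : EuclideanSpace ℝ (Fin k)) 1,
        (∑ j, (ε j)⁻¹ ^ 2 * ((y : EuclideanSpace ℝ (Fin k)) j) ^ 2) ^ s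
        ∂(volume : Measure (EuclideanSpace ℝ (Fin k))).toSphere := by
  have h := FF_change k s ε hε
  rw [FF_int k hk s hs0 _ _ hε (fun _ => one_pos),
    FF_int k hk s hs0 _ _ (fun _ => one_pos) (fun j => inv_pos.2 (hε j))] at h
  simp only [QF_one, Real.one_rpow, mul_one, one_mul] at h
  have hk' : (0:ℝ) < k + 2 * s := by positivity
  rw [← mul_div_assoc, div_left_inj' hk'.ne'] at h
  exact h
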